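/- Let S be a finite set of n-qubit Pauli operators and let T ⊆ S be the subset obtained by removing from S every operator that commutes with all other operators in S. Then S is contextual if and only if there exist three operators A, B, C ∈ T such that A commutes with B, A commutes with C, and B anticommutes with C. -/

import Mathlib

/-!
Any two Pauli operators commute or anticommute, Pauli operators square to `1`, and a product of two
commuting ones is again Pauli (`mul_self_of_isPauli`, `commute_or_anti`, `IsPauli.mul`).

If a triple `A, B, C` as in the theorem exists, some `D ∈ S` anticommutes with `A`. When `D`
commutes with `B` and `C`, these four operators form a Mermin square: `(AB)(DC)` and `(AC)(DB)` are
products along determining trees with the same leaves, and they differ by a sign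
(`contextual_of_square`). In the other cases `D` is replaced by one of `CD`, `BD`, `((AB)D)C`, each
of which has a determining tree and the commutation relations required of `D`.

If no such triple exists, commutation is an equivalence relation on `T`. Choose a representative `c`
of each class, and put `g x = x c` if `x ∈ T` has class representative `c`, and `g x = x` if
`x ∈ S \ T`. The operators `g x` are involutions commuting with each other and with all the
representatives, so the product `G L` of `g` over a multiset `L` depends only on the parities of the
multiplicities. By induction on the tree, a label with leaf multiset `L` is `G L * c` with `c` equal
to `1` or to a representative: two distinct representatives anticommute, so commuting labels
can be multiplied only when their `c`-parts agree or one of them is `1`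
(`exists_label_eq_of_valid`). Equal determining sets for `A` and `-A` would then force `c = -c'` for
two such elements, which is impossible.
-/

open Matrix

/-- Index type for `n` qubits: `Fin n → Fin 2` has cardinality `2^n`. -/
abbrev QubitIdx (n : ℕ) := Fin n → Fin 2

/-- `2^n × 2^n` complex matrices. -/
abbrev Mat (n : ℕ) := Matrix (QubitIdx n) (QubitIdx n) ℂ

/-- The four single-qubit Pauli matrices `I, X, Y, Z`. -/
noncomputable def pauliMat : Fin 4 → Matrix (Fin 2) (Fin 2) ℂ :=
  ![1, !![0, 1; 1, 0], !![0, -Complex.I; Complex.I, 0], !![1, 0; 0, -1]]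

/-- The tensor product `P₁ ⊗ ⋯ ⊗ Pₙ` of single-qubit Pauli matrices. -/
noncomputable def pauliTensor (n : ℕ) (f : Fin n → Fin 4) : Mat n :=
  fun i k => ∏ j, pauliMat (f j) (i j) (k j)

/-- An `n`-qubit Pauli operator: `ε • P₁ ⊗ ⋯ ⊗ Pₙ` with `ε ∈ {1, -1}`. -/
def IsPauli (n : ℕ) (M : Mat n) : Prop :=
  ∃ (ε : ℂ) (f : Fin n → Fin 4), (ε = 1 ∨ ε = -1) ∧ M = ε • pauliTensor n f

/-- Two operators anticommute. -/
def PAntiCommute {n : ℕ} (A B : Mat n) : Prop := A * B = -(B * A)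

/-- Finite rooted trees whose nodes are labeled by `2^n × 2^n` matrices.
A `leaf` has no children; a `node` has a (finite) list of children. -/
inductive PTree (n : ℕ) : Type
  | leaf : Mat n → PTree n
  | node : Mat n → List (PTree n) → PTree n

namespace PTree

variable {n : ℕ}

/-- The label of the root of the tree. -/
def label : PTree n → Mat n
  | leaf M => M
  | node M _ => M

mutual
/-- The multiset of leaf labels of the tree. -/
def leaves : PTree n → Multiset (Mat n)
  | .leaf M => {M}
  | .node _ cs => leavesList cs
/-- The multiset of leaf labels of a list of trees. -/
def leavesList : List (PTree n) → Multiset (Mat n)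
  | [] => 0
  | c :: cs => c.leaves + leavesList cs
end

mutual
/-- The list of leaf labels of the tree in depth-first (left-to-right) order. -/
def leafList : PTree n → List (Mat n)
  | .leaf M => [M]
  | .node _ cs => leafListList cs
/-- The list of leaf labels of a list of trees, in depth-first order. -/
def leafListList : List (PTree n) → List (Mat n)
  | [] => []
  | c :: cs => c.leafList ++ leafListList cs
end

mutual
/-- The multiset of all node labels of the tree. -/
def nodeLabels : PTree n → Multiset (Mat n)
  | .leaf M => {M}
  | .node M cs => M ::ₘ nodeLabelsList cs
/-- The multiset of all node labels of a list of trees. -/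
def nodeLabelsList : List (PTree n) → Multiset (Mat n)
  | [] => 0
  | c :: cs => c.nodeLabels + nodeLabelsList cs
end

/-- The multiset of labels of all nodes at depth ≥ 2, i.e. strictly below
the children of the root. -/
def deepLabels : PTree n → Multiset (Mat n)
  | .leaf _ => 0
  | .node _ cs => (cs.map fun c =>
      match c with
      | .leaf _ => (0 : Multiset (Mat n))
      | .node _ cs' => nodeLabelsList cs').sum

/-- A valid determining tree over a set `S`: every leaf is labeled by an
element of `S`, every node is labeled by a Pauli operator, and for every
internal node, the labels of its children pairwise commute and the label of
the node is the matrix product of the labels of its children. -/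
inductive Valid (S : Set (Mat n)) : PTree n → Prop
  | leaf {M : Mat n} : M ∈ S → Valid S (PTree.leaf M)
  | node {M : Mat n} {cs : List (PTree n)} :
      IsPauli n M →
      M = (cs.map label).prod →
      cs.Pairwise (fun a b => Commute a.label b.label) →
      (∀ c ∈ cs, Valid S c) →
      Valid S (PTree.node M cs)

/-- Every internal node of the tree has at most two children. -/
inductive Binary : PTree n → Prop
  | leaf (M : Mat n) : Binary (PTree.leaf M)
  | node (M : Mat n) (cs : List (PTree n)) :
      cs.length ≤ 2 → (∀ c ∈ cs, Binary c) → Binary (PTree.node M cs)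

open scoped Classical in
/-- The determining set of a tree: the set of operators occurring with odd
total multiplicity among its leaves. -/
noncomputable def detSet (τ : PTree n) : Set (Mat n) :=
  {M | Odd (τ.leaves.count M)}

end PTree

/-- `τ` is a determining tree for `A` over `S`. -/
def IsDetTree {n : ℕ} (S : Set (Mat n)) (A : Mat n) (τ : PTree n) : Prop :=
  PTree.Valid S τ ∧ τ.label = A

/-- A set `S` of Pauli operators is contextual if for some Pauli operator `A`
there are determining trees for `A` and for `-A` over `S` with identical
determining sets. -/
def Contextual (n : ℕ) (S : Set (Mat n)) : Prop :=
  ∃ (A : Mat n) (τ τ' : PTree n), IsPauli n A ∧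
    IsDetTree S A τ ∧ IsDetTree S (-A) τ' ∧ τ.detSet = τ'.detSet

/-! ### Algebra of Pauli operators -/

/-- The tensor product of `2 × 2` matrices, extending `pauliTensor` to arbitrary factors. -/
def tensor {n : ℕ} (F : Fin n → Matrix (Fin 2) (Fin 2) ℂ) : Mat n :=
  fun i k => ∏ j, F j (i j) (k j)

lemma pauliTensor_eq {n : ℕ} (f : Fin n → Fin 4) :
    pauliTensor n f = tensor fun j => pauliMat (f j) := rfl

lemma tensor_mul {n : ℕ} (F G : Fin n → Matrix (Fin 2) (Fin 2) ℂ) :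
    tensor F * tensor G = tensor fun j => F j * G j := by
  ext i k
  simp only [tensor, Matrix.mul_apply, ← Finset.prod_mul_distrib]
  rw [Finset.prod_univ_sum, Fintype.piFinset_univ]

lemma tensor_smul {n : ℕ} (c : Fin n → ℂ) (F : Fin n → Matrix (Fin 2) (Fin 2) ℂ) :
    (tensor fun j => c j • F j) = (∏ j, c j) • tensor F := by
  ext i k
  simp [tensor, Finset.prod_mul_distrib]

lemma tensor_one {n : ℕ} : (tensor fun _ => 1 : Mat n) = 1 := by
  ext i k
  by_cases h : i = k
  · subst h; simp [tensor]
  · obtain ⟨j, hj⟩ := Function.ne_iff.1 h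
    rw [Matrix.one_apply_ne h]
    exact Finset.prod_eq_zero (Finset.mem_univ j) (Matrix.one_apply_ne hj)

lemma pauliMat_mul_self (a : Fin 4) : pauliMat a * pauliMat a = 1 := by
  fin_cases a <;> ext i j <;> fin_cases i <;> fin_cases j <;>
    simp [pauliMat, Matrix.mul_apply, Fin.sum_univ_two]

lemma pauliMat_comm (a b : Fin 4) :
    ∃ s : ℂ, s ^ 2 = 1 ∧ pauliMat a * pauliMat b = s • (pauliMat b * pauliMat a) := by
  have key : pauliMat a * pauliMat b = (1 : ℂ) • (pauliMat b * pauliMat a) ∨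
      pauliMat a * pauliMat b = (-1 : ℂ) • (pauliMat b * pauliMat a) := by
    fin_cases a <;> fin_cases b <;> simp [pauliMat]
  rcases key with h | h
  · exact ⟨1, by norm_num, h⟩
  · exact ⟨-1, by norm_num, h⟩

lemma pauliMat_zero : pauliMat 0 = 1 := rfl

/-- The phases that occur are the fourth roots of unity. -/
lemma pauliMat_mul (a b : Fin 4) :
    ∃ (s : ℂ) (c : Fin 4), s ^ 4 = 1 ∧ pauliMat a * pauliMat b = s • pauliMat c := by
  have hI : Complex.I ^ 4 = 1 := Complex.I_pow_four
  have hI' : (-Complex.I) ^ 4 = 1 := by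
    rw [neg_pow, hI]; norm_num
  fin_cases a <;> fin_cases b
  · exact ⟨1, 0, by simp, by simp [pauliMat]⟩
  · exact ⟨1, 1, by simp, by simp [pauliMat]⟩
  · exact ⟨1, 2, by simp, by simp [pauliMat]⟩
  · exact ⟨1, 3, by simp, by simp [pauliMat]⟩
  · exact ⟨1, 1, by simp, by simp [pauliMat]⟩
  · exact ⟨1, 0, by simp, by simpa [pauliMat_zero] using pauliMat_mul_self 1⟩
  · exact ⟨Complex.I, 3, hI, by simp [pauliMat]⟩
  · exact ⟨-Complex.I, 2, hI', by simp [pauliMat]⟩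
  · exact ⟨1, 2, by simp, by simp [pauliMat]⟩
  · exact ⟨-Complex.I, 3, hI', by simp [pauliMat]⟩
  · exact ⟨1, 0, by simp, by simpa [pauliMat_zero] using pauliMat_mul_self 2⟩
  · exact ⟨Complex.I, 1, hI, by simp [pauliMat]⟩
  · exact ⟨1, 3, by simp, by simp [pauliMat]⟩
  · exact ⟨Complex.I, 2, hI, by simp [pauliMat]⟩
  · exact ⟨-Complex.I, 1, hI', by simp [pauliMat]⟩
  · exact ⟨1, 0, by simp, by simpa [pauliMat_zero] using pauliMat_mul_self 3⟩

lemma pauliTensor_mul_self {n : ℕ} (f : Fin n → Fin 4) :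
    pauliTensor n f * pauliTensor n f = 1 := by
  simp only [pauliTensor_eq, tensor_mul, pauliMat_mul_self, tensor_one]

lemma mul_self_of_isPauli {n : ℕ} {A : Mat n} (hA : IsPauli n A) : A * A = 1 := by
  obtain ⟨ε, f, hε, rfl⟩ := hA
  rcases hε with rfl | rfl <;> simp [pauliTensor_mul_self]

lemma commute_or_anti {n : ℕ} {A B : Mat n} (hA : IsPauli n A) (hB : IsPauli n B) :
    Commute A B ∨ PAntiCommute A B := by
  obtain ⟨ε, f, -, rfl⟩ := hA
  obtain ⟨δ, g, -, rfl⟩ := hB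
  choose s hs h using pauliMat_comm
  have key : pauliTensor n f * pauliTensor n g =
      (∏ j, s (f j) (g j)) • (pauliTensor n g * pauliTensor n f) := by
    simp only [pauliTensor_eq, tensor_mul]
    rw [← tensor_smul]
    congr 1
    funext j
    exact h _ _
  have hp : (∏ j, s (f j) (g j)) ^ 2 = 1 := by
    simp [← Finset.prod_pow, hs]
  rcases mul_self_eq_one_iff.1 ((sq _).symm.trans hp) with h1 | h1
  · left
    simp only [Commute, SemiconjBy, Matrix.smul_mul, Matrix.mul_smul, key, h1, one_smul]
    rw [smul_comm]
  · right
    simp only [PAntiCommute, Matrix.smul_mul, Matrix.mul_smul, key, h1, neg_smul, one_smul,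
      smul_neg]
    rw [smul_comm]

lemma IsPauli.neg {n : ℕ} {A : Mat n} (hA : IsPauli n A) : IsPauli n (-A) := by
  obtain ⟨ε, f, hε, rfl⟩ := hA
  refine ⟨-ε, f, ?_, by simp⟩
  rcases hε with rfl | rfl <;> simp

/-- In general the product of two Pauli operators carries a phase that is a fourth root of unity;
commutation makes the product an involution, which forces the phase to be real. -/
lemma IsPauli.mul {n : ℕ} {A B : Mat n} (hA : IsPauli n A) (hB : IsPauli n B)
    (hAB : Commute A B) : IsPauli n (A * B) := by
  have hsq : (A * B) * (A * B) = 1 := by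
    rw [hAB.symm.mul_mul_mul_comm, mul_self_of_isPauli hA, mul_self_of_isPauli hB, one_mul]
  obtain ⟨ε, f, -, rfl⟩ := hA
  obtain ⟨δ, g, -, rfl⟩ := hB
  choose s c hs h using pauliMat_mul
  have key : (ε • pauliTensor n f) * (δ • pauliTensor n g) =
      (ε * (δ * ∏ j, s (f j) (g j))) • pauliTensor n fun j => c (f j) (g j) := by
    simp only [Matrix.smul_mul, Matrix.mul_smul, pauliTensor_eq, tensor_mul, h, tensor_smul,
      smul_smul, mul_left_comm δ ε]
  rw [key] at hsq ⊢
  refine ⟨_, _, ?_, rfl⟩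
  rw [Matrix.smul_mul, Matrix.mul_smul, pauliTensor_mul_self, smul_smul] at hsq
  have := congrFun (congrFun hsq 0) 0
  simp only [Matrix.smul_apply, Matrix.one_apply_eq, smul_eq_mul, mul_one] at this
  exact mul_self_eq_one_iff.1 this

lemma eq_zero_of_eq_neg {n : ℕ} {A : Mat n} (h : A = -A) : A = 0 := by
  ext i j
  exact self_eq_neg.1 (congrFun (congrFun h i) j)

lemma not_anti_of_commute {n : ℕ} {A B : Mat n} (hA : IsPauli n A) (hB : IsPauli n B)
    (h : Commute A B) : ¬ PAntiCommute A B := by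
  intro h'
  have h0 : A * B = 0 := eq_zero_of_eq_neg (h'.trans (by rw [h.eq]))
  have h1 : (1 : Mat n) = 0 := by
    rw [← mul_self_of_isPauli (hA.mul hB h), h0, zero_mul]
  exact one_ne_zero h1

/-! ### A triple gives contextuality -/

lemma PAntiCommute.symm {n : ℕ} {A B : Mat n} (h : PAntiCommute A B) : PAntiCommute B A := by
  unfold PAntiCommute at *; rw [h, neg_neg]

lemma PAntiCommute.mul_right {n : ℕ} {A B C : Mat n} (h : PAntiCommute A B)
    (h' : PAntiCommute A C) : Commute A (B * C) := by
  unfold PAntiCommute at *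
  rw [Commute, SemiconjBy, ← mul_assoc, h, neg_mul, mul_assoc, h', mul_neg, neg_neg, mul_assoc]

lemma PAntiCommute.mul_comm_right {n : ℕ} {A B C : Mat n} (h : PAntiCommute A B)
    (h' : Commute A C) : PAntiCommute A (B * C) := by
  unfold PAntiCommute at *
  rw [← mul_assoc, h, neg_mul, mul_assoc, h'.eq, mul_assoc]

lemma PAntiCommute.comm_mul_right {n : ℕ} {A B C : Mat n} (h : Commute A B)
    (h' : PAntiCommute A C) : PAntiCommute A (B * C) := by
  unfold PAntiCommute at *
  rw [← mul_assoc, h.eq, mul_assoc, h', mul_neg, mul_assoc]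

namespace PTree

lemma Valid.isPauli {n : ℕ} {S : Set (Mat n)} (hS : ∀ M ∈ S, IsPauli n M) {t : PTree n}
    (h : Valid S t) : IsPauli n t.label := by
  cases h with
  | leaf h => exact hS _ h
  | node h _ _ _ => exact h

/-- The tree whose root has the two given subtrees as children. -/
def join {n : ℕ} (t u : PTree n) : PTree n := node (t.label * u.label) [t, u]

lemma leaves_join {n : ℕ} (t u : PTree n) : (join t u).leaves = t.leaves + u.leaves := by
  simp [join, leaves, leavesList]

lemma Valid.join {n : ℕ} {S : Set (Mat n)} (hS : ∀ M ∈ S, IsPauli n M) {t u : PTree n}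
    (ht : Valid S t) (hu : Valid S u) (h : Commute t.label u.label) : Valid S (join t u) :=
  Valid.node ((ht.isPauli hS).mul (hu.isPauli hS) h) (by simp) (by simpa using h)
    (by simp [ht, hu])

end PTree

open PTree in
/-- The Mermin square on `A, B, C` and the label of `d`. -/
lemma contextual_of_square {n : ℕ} {S : Set (Mat n)} (hS : ∀ M ∈ S, IsPauli n M) {A B C : Mat n}
    (hA : A ∈ S) (hB : B ∈ S) (hC : C ∈ S) {d : PTree n} (hd : Valid S d)
    (hAB : Commute A B) (hAC : Commute A C) (hBC : PAntiCommute B C)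
    (hAd : PAntiCommute A d.label) (hBd : Commute B d.label) (hCd : Commute C d.label) :
    Contextual n S := by
  have vA : Valid S (leaf A) := .leaf hA
  have vB : Valid S (leaf B) := .leaf hB
  have vC : Valid S (leaf C) := .leaf hC
  have v1 := vA.join hS vB hAB
  have v2 := hd.join hS vC hCd.symm
  have v3 := vA.join hS vC hAC
  have v4 := hd.join hS vB hBd.symm
  have c12 : Commute (A * B) (d.label * C) := by
    have h1 : PAntiCommute (d.label * C) A := (hAd.mul_comm_right hAC).symm
    have h2 : PAntiCommute (d.label * C) B := (PAntiCommute.comm_mul_right hBd hBC).symm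
    exact (h1.mul_right h2).symm
  have c34 : Commute (A * C) (d.label * B) := by
    have h1 : PAntiCommute (d.label * B) A := (hAd.mul_comm_right hAB).symm
    have h2 : PAntiCommute (d.label * B) C := (PAntiCommute.comm_mul_right hCd hBC.symm).symm
    exact (h1.mul_right h2).symm
  have v5 := v1.join hS v2 c12
  have v6 := v3.join hS v4 c34
  refine ⟨_, _, _, v5.isPauli hS, ⟨v5, rfl⟩, ⟨v6, ?_⟩, ?_⟩
  · change A * C * (d.label * B) = -(A * B * (d.label * C))
    have h : B * C = -(C * B) := hBC
    calc A * C * (d.label * B) = A * (C * d.label) * B := by simp only [mul_assoc]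
      _ = A * d.label * (C * B) := by rw [hCd.eq]; simp only [mul_assoc]
      _ = -(A * d.label * (B * C)) := by rw [h, mul_neg, neg_neg]
      _ = -(A * (d.label * B) * C) := by simp only [mul_assoc]
      _ = -(A * B * (d.label * C)) := by rw [← hBd.eq]; simp only [mul_assoc]
  · have : (((leaf A).join (leaf B)).join (d.join (leaf C))).leaves =
        (((leaf A).join (leaf C)).join (d.join (leaf B))).leaves := by
      simp only [leaves_join]; abel
    unfold detSet
    rw [this]

open PTree in
lemma contextual_of_triple {n : ℕ} {S : Set (Mat n)} (hS : ∀ M ∈ S, IsPauli n M) {A B C D : Mat n}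
    (hA : A ∈ S) (hB : B ∈ S) (hC : C ∈ S) (hD : D ∈ S)
    (hAB : Commute A B) (hAC : Commute A C) (hBC : PAntiCommute B C) (hAD : PAntiCommute A D) :
    Contextual n S := by
  have vA : Valid S (leaf A) := .leaf hA
  have vB : Valid S (leaf B) := .leaf hB
  have vC : Valid S (leaf C) := .leaf hC
  have vD : Valid S (leaf D) := .leaf hD
  rcases commute_or_anti (hS B hB) (hS D hD) with hBD | hBD <;>
    rcases commute_or_anti (hS C hC) (hS D hD) with hCD | hCD
  · exact contextual_of_square hS hA hB hC vD hAB hAC hBC hAD hBD hCD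
  · exact contextual_of_square hS hA hB hC (vB.join hS vD hBD) hAB hAC hBC
      (PAntiCommute.comm_mul_right hAB hAD) ((Commute.refl B).mul_right hBD)
      (hBC.symm.mul_right hCD)
  · exact contextual_of_square hS hA hB hC (vC.join hS vD hCD) hAB hAC hBC
      (PAntiCommute.comm_mul_right hAC hAD) (hBC.mul_right hBD)
      ((Commute.refl C).mul_right hCD)
  · have h1 : Commute (A * B) D := (hAD.symm.mul_right hBD.symm).symm
    have v1 := (vA.join hS vB hAB).join hS vD h1
    have h2 : Commute C (A * B * D) :=
      (PAntiCommute.comm_mul_right hAC.symm hBC.symm).mul_right hCD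
    refine contextual_of_square hS hA hB hC (v1.join hS vC h2.symm) hAB hAC hBC ?_ ?_ ?_
    · exact (PAntiCommute.comm_mul_right ((Commute.refl A).mul_right hAB) hAD).mul_comm_right hAC
    · exact (PAntiCommute.comm_mul_right (hAB.symm.mul_right (.refl B)) hBD).mul_right hBC
    · exact h2.mul_right (.refl C)

/-! ### Products of commuting involutions -/

lemma prod_map_eq_of_parity {α N : Type*} [CommMonoid N] [DecidableEq α] (f : α → N)
    (hf : ∀ x, f x * f x = 1) (L L' : Multiset α)
    (h : ∀ x, Odd (L.count x) ↔ Odd (L'.count x)) : (L.map f).prod = (L'.map f).prod := by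
  have key : ∀ K : Multiset α, K ≤ L ∪ L' →
      (K.map f).prod = ∏ x ∈ (L ∪ L').toFinset, f x ^ K.count x := by
    intro K hK
    rw [Finset.prod_multiset_map_count]
    refine Finset.prod_subset (Multiset.toFinset_subset.2 (Multiset.subset_of_le hK)) ?_
    intro x _ hx
    rw [Multiset.count_eq_zero.2 (by simpa using hx), pow_zero]
  have hpow : ∀ x k, f x ^ k = if Odd k then f x else 1 := by
    intro x k
    split_ifs with hk
    · obtain ⟨m, rfl⟩ := hk
      rw [pow_succ, pow_mul, sq, hf, one_pow, one_mul]
    · obtain ⟨m, rfl⟩ := Nat.not_odd_iff_even.1 hk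
      rw [← two_mul, pow_mul, sq, hf, one_pow]
  rw [key L Multiset.le_union_left, key L' Multiset.le_union_right]
  refine Finset.prod_congr rfl fun x _ => ?_
  rw [hpow, hpow, if_congr (h x) rfl rfl]

open scoped Classical in
/-- A product over multisets for a family of pairwise commuting involutions of a monoid; it is
computed in the commutative submonoid they generate. -/
lemma exists_multiset_prod {α M : Type*} [Monoid M] (f : α → M)
    (hc : ∀ x y, f x * f y = f y * f x) (hf : ∀ x, f x * f x = 1) :
    ∃ G : Multiset α → M, G 0 = 1 ∧ (∀ x L, G (x ::ₘ L) = f x * G L) ∧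
      (∀ L L', G (L + L') = G L * G L') ∧
      ∀ L L', (∀ x, Odd (L.count x) ↔ Odd (L'.count x)) → G L = G L' := by
  have hcl := Submonoid.isMulCommutative_closure M (s := Set.range f) (by
    rintro _ ⟨x, rfl⟩ _ ⟨y, rfl⟩
    exact hc x y)
  let : CommMonoid (Submonoid.closure (Set.range f)) :=
    { (inferInstance : Monoid (Submonoid.closure (Set.range f))) with
      mul_comm := hcl.is_comm.comm }
  let f' : α → Submonoid.closure (Set.range f) :=
    fun x => ⟨f x, Submonoid.subset_closure ⟨x, rfl⟩⟩
  refine ⟨fun L => ((L.map f').prod : Submonoid.closure (Set.range f)), ?_, ?_, ?_, ?_⟩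
  · simp only [Multiset.map_zero, Multiset.prod_zero]; rfl
  · intro x L
    simp only [Multiset.map_cons, Multiset.prod_cons]; rfl
  · intro L L'
    simp only [Multiset.map_add, Multiset.prod_add]; rfl
  · intro L L' h
    exact congrArg Subtype.val
      (prod_map_eq_of_parity f' (fun x => Subtype.ext (hf x)) L L' h)

/-! ### Without a triple there is no contextuality -/

/-- The normal form of labels. `R` is a set of pairwise noncommuting involutions, and `G` is
multiplicative with involutive values commuting with `R`; the form is assumed for elements of `S` and
propagates from the leaves to the root. -/
lemma exists_label_eq_of_valid {n : ℕ} {S R : Set (Mat n)} {G : Multiset (Mat n) → Mat n}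
    (h0 : G 0 = 1) (hadd : ∀ L L', G (L + L') = G L * G L') (hsq : ∀ L, G L * G L = 1)
    (hGR : ∀ L, ∀ r ∈ R, Commute (G L) r) (hRsq : ∀ r ∈ R, r * r = 1)
    (hR : ∀ r ∈ R, ∀ r' ∈ R, Commute r r' → r = r')
    (hS : ∀ x ∈ S, ∃ c, (c = 1 ∨ c ∈ R) ∧ x = G {x} * c) {t : PTree n} (ht : t.Valid S) :
    ∃ c, (c = 1 ∨ c ∈ R) ∧ t.label = G t.leaves * c := by
  have hGc : ∀ L c, (c = 1 ∨ c ∈ R) → Commute (G L) c := by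
    rintro L c (rfl | hc)
    · exact Commute.one_right _
    · exact hGR L c hc
  have hGG : ∀ L L', Commute (G L) (G L') := fun L L' => by
    rw [Commute, SemiconjBy, ← hadd, ← hadd, add_comm]
  induction ht with
  | leaf h => simpa [PTree.label, PTree.leaves] using hS _ h
  | @node M cs hM hprod hcomm _ ih =>
    simp only [PTree.label, PTree.leaves]
    rw [hprod]
    clear hprod hM M
    induction cs with
    | nil => exact ⟨1, Or.inl rfl, by simp [PTree.leavesList, h0]⟩
    | cons t cs IH =>
      rw [List.pairwise_cons] at hcomm
      obtain ⟨c, hc, h1⟩ := ih t (by simp)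
      obtain ⟨c', hc', h2⟩ := IH hcomm.2 (by aesop) fun u hu => ih u (by simp [hu])
      have hcom : Commute t.label (cs.map PTree.label).prod := by
        refine Commute.list_prod_right _ _ fun x hx => ?_
        obtain ⟨u, hu, rfl⟩ := List.mem_map.1 hx
        exact hcomm.1 u hu
      simp only [List.map_cons, List.prod_cons, PTree.leavesList, hadd]
      rw [h1, h2] at hcom
      rw [h1, h2]
      set g := G t.leaves
      set g' := G (PTree.leavesList cs)
      have e1 : g * c * (g' * c') = g * g' * (c * c') :=
        (hGc _ c hc).symm.mul_mul_mul_comm _ _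
      have e2 : g' * c' * (g * c) = g * g' * (c' * c) := by
        rw [(hGc _ c' hc').symm.mul_mul_mul_comm, (hGG _ _).eq]
      have hinv : (g * g') * (g * g') = 1 := by
        have := hsq (t.leaves + PTree.leavesList cs)
        rwa [hadd] at this
      have hcc : Commute c c' := by
        have h3 : g * g' * (c * c') = g * g' * (c' * c) := by rw [← e1, ← e2, hcom.eq]
        have h4 := congrArg (g * g' * ·) h3
        simp only [← mul_assoc (g * g') (g * g'), hinv, one_mul] at h4
        exact h4
      rw [e1]
      rcases hc with rfl | hc
      · exact ⟨c', hc', by rw [one_mul]⟩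
      rcases hc' with rfl | hc'
      · exact ⟨c, Or.inr hc, by rw [mul_one]⟩
      · obtain rfl := hR c hc c' hc' hcc
        exact ⟨1, Or.inl rfl, by rw [hRsq c hc]⟩

open scoped Classical in
lemma not_contextual {n : ℕ} {S T : Set (Mat n)} (hS : ∀ M ∈ S, IsPauli n M) (hTS : T ⊆ S)
    (hcentral : ∀ P ∈ S, P ∉ T → ∀ Q ∈ S, Commute P Q)
    (hT : ∀ P ∈ T, ∃ Q ∈ S, ¬ Commute P Q)
    (htrans : ∀ A ∈ T, ∀ B ∈ T, ∀ C ∈ T, Commute A B → Commute A C → Commute B C) :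
    ¬ Contextual n S := by
  let s : Setoid T :=
    { r := fun x y => Commute (x : Mat n) y
      iseqv := ⟨fun x => Commute.refl _, fun h => h.symm,
        fun {x y z} h h' => htrans y y.2 x x.2 z z.2 h.symm h'⟩ }
  obtain ⟨rep, hrepT, hxrep, hreps⟩ : ∃ rep : Mat n → Mat n, (∀ x ∈ T, rep x ∈ T) ∧
      (∀ x ∈ T, Commute x (rep x)) ∧
      (∀ x ∈ T, ∀ y ∈ T, Commute x y → rep x = rep y) := by
    refine ⟨fun x => if h : x ∈ T then ((Quotient.mk s ⟨x, h⟩).out : T) else 1, ?_, ?_, ?_⟩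
    · intro x hx
      simp only [hx, dif_pos]
      exact Subtype.coe_prop _
    · intro x hx
      simp only [hx, dif_pos]
      exact (show Commute ((Quotient.mk s ⟨x, hx⟩).out : Mat n) x from
        Quotient.mk_out (s := s) ⟨x, hx⟩).symm
    · intro x hx y hy h
      simp only [hx, hy, dif_pos]
      have : Quotient.mk s ⟨x, hx⟩ = Quotient.mk s ⟨y, hy⟩ := Quotient.sound (s := s) h
      rw [this]
  have hsqS : ∀ x ∈ S, x * x = 1 := fun x hx => mul_self_of_isPauli (hS x hx)
  have hcoa : ∀ x ∈ T, ∀ y ∈ T, Commute x y ∨ PAntiCommute x y := fun x hx y hy =>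
    commute_or_anti (hS x (hTS hx)) (hS y (hTS hy))
  -- A product of two elements of one class commutes with all of `T`.
  have hpair : ∀ x ∈ T, ∀ y ∈ T, Commute y (x * rep x) := by
    intro x hx y hy
    rcases hcoa y hy x hx with h | h
    · exact h.mul_right (htrans x hx y hy _ (hrepT x hx) h.symm (hxrep x hx))
    · rcases hcoa y hy _ (hrepT x hx) with h' | h'
      · have := htrans _ (hrepT x hx) y hy x hx h'.symm (hxrep x hx).symm
        exact absurd h (not_anti_of_commute (hS y (hTS hy)) (hS x (hTS hx)) this)
      · exact h.mul_right h'
  let g : Mat n → Mat n := fun x => if x ∈ T then x * rep x else if x ∈ S then x else 1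
  have hgT : ∀ x ∈ T, g x = x * rep x := fun x hx => if_pos hx
  have hgS : ∀ x ∈ S, ∀ y, Commute x (g y) := by
    intro x hx y
    by_cases hy : y ∈ T
    · rw [hgT y hy]
      by_cases hxT : x ∈ T
      · exact hpair y hy x hxT
      · exact (hcentral x hx hxT y (hTS hy)).mul_right
          (hcentral x hx hxT _ (hTS (hrepT y hy)))
    · by_cases hyS : y ∈ S
      · simpa only [g, if_neg hy, if_pos hyS] using (hcentral y hyS hy x hx).symm
      · simpa only [g, if_neg hy, if_neg hyS] using Commute.one_right x
  have hgg : ∀ x y, g x * g y = g y * g x := by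
    intro x y
    by_cases hx : x ∈ T
    · rw [hgT x hx]
      exact (hgS x (hTS hx) y).mul_left (hgS _ (hTS (hrepT x hx)) y)
    · by_cases hxS : x ∈ S
      · have : g x = x := by simp only [g, if_neg hx, if_pos hxS]
        rw [this]
        exact hgS x hxS y
      · simp only [g, if_neg hx, if_neg hxS, one_mul, mul_one]
  have hgsq : ∀ x, g x * g x = 1 := by
    intro x
    by_cases hx : x ∈ T
    · rw [hgT x hx, (hxrep x hx).symm.mul_mul_mul_comm, hsqS x (hTS hx),
        hsqS _ (hTS (hrepT x hx)), one_mul]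
    · by_cases hxS : x ∈ S
      · simp only [g, if_neg hx, if_pos hxS, hsqS x hxS]
      · simp only [g, if_neg hx, if_neg hxS, one_mul]
  obtain ⟨G, hG0, hGcons, hGadd, hGpar⟩ := exists_multiset_prod g hgg hgsq
  have hGsq : ∀ L, G L * G L = 1 := by
    intro L
    rw [← hGadd, ← hG0]
    refine hGpar _ _ fun x => ?_
    simp
  have hGS : ∀ L, ∀ r ∈ S, Commute (G L) r := by
    intro L r hr
    induction L using Multiset.induction with
    | empty => rw [hG0]; exact Commute.one_left r
    | cons x L ih => rw [hGcons]; exact (hgS r hr x).symm.mul_left ih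
  have hRS : Set.image rep T ⊆ T := by
    rintro _ ⟨x, hx, rfl⟩
    exact hrepT x hx
  have hRcomm : ∀ r ∈ Set.image rep T, ∀ r' ∈ Set.image rep T, Commute r r' → r = r' := by
    rintro _ ⟨x, hx, rfl⟩ _ ⟨y, hy, rfl⟩ h
    refine hreps x hx y hy ?_
    have h1 : Commute x (rep y) :=
      htrans _ (hrepT x hx) x hx _ (hrepT y hy) (hxrep x hx).symm h
    exact htrans _ (hrepT y hy) x hx y hy h1.symm (hxrep y hy).symm
  have hG1 : ∀ x, G {x} = g x := by
    intro x
    rw [← Multiset.cons_zero, hGcons, hG0, mul_one]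
  have hnf : ∀ t : PTree n, t.Valid S →
      ∃ c, (c = 1 ∨ c ∈ Set.image rep T) ∧ t.label = G t.leaves * c := by
    intro t ht
    refine exists_label_eq_of_valid hG0 hGadd hGsq (fun L r hr => hGS L r (hTS (hRS hr)))
      (fun r hr => hsqS r (hTS (hRS hr))) hRcomm ?_ ht
    intro x hx
    by_cases hxT : x ∈ T
    · refine ⟨rep x, Or.inr ⟨x, hxT, rfl⟩, ?_⟩
      rw [hG1, hgT x hxT, mul_assoc, hsqS _ (hTS (hrepT x hxT)), mul_one]
    · refine ⟨1, Or.inl rfl, ?_⟩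
      simp only [hG1, g, if_neg hxT, if_pos hx, mul_one]
  rintro ⟨A, τ, τ', -, ⟨hτ, hA⟩, ⟨hτ', hA'⟩, hdet⟩
  obtain ⟨c, hc, h1⟩ := hnf τ hτ
  obtain ⟨c', hc', h2⟩ := hnf τ' hτ'
  have hGG : G τ.leaves = G τ'.leaves := by
    refine hGpar _ _ fun x => ?_
    have := Set.ext_iff.1 hdet x
    simp only [PTree.detSet, Set.mem_ofPred_eq] at this
    convert this
  rw [hA] at h1
  rw [hA', ← hGG, h1] at h2
  have hcc : c' = -c := by
    have h3 := congrArg (G τ.leaves * ·) h2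
    simp only [mul_neg, ← mul_assoc, hGsq, one_mul] at h3
    exact h3.symm
  -- Elements of `T` are not scalar.
  have hnT : ∀ r ∈ Set.image rep T, r ≠ -1 := by
    rintro r hr rfl
    obtain ⟨Q, -, hQ⟩ := hT _ (hRS hr)
    exact hQ ((Commute.one_left Q).neg_left)
  have hself : ∀ x : Mat n, x * x = 1 → x ≠ -x := by
    intro x hx h
    have h0 : x = 0 := eq_zero_of_eq_neg h
    rw [h0, zero_mul] at hx
    exact zero_ne_one hx
  rcases hc with rfl | hc
  · rcases hc' with rfl | hc'
    · exact hself 1 (one_mul 1) hcc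
    · exact hnT c' hc' hcc
  · rcases hc' with rfl | hc'
    · exact hnT c hc (by rw [hcc, neg_neg])
    · have : c = c' := hRcomm c hc c' hc' (by rw [hcc]; exact (Commute.refl c).neg_right)
      exact hself c (hsqS c (hTS (hRS hc))) (this.trans hcc)

/-- Let `T ⊆ S` be obtained by removing from `S` every operator
commuting with all other operators in `S`. Then `S` is contextual iff there
are `A, B, C ∈ T` such that `A` commutes with `B` and with `C`, while `B`
anticommutes with `C`. -/
theorem contextual_iff_exists_triple {n : ℕ} (S : Finset (Mat n))
    (hS : ∀ M ∈ S, IsPauli n M) (T : Set (Mat n))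
    (hT : T = {P | P ∈ (↑S : Set (Mat n)) ∧ ∃ Q ∈ S, Q ≠ P ∧ ¬ Commute P Q}) :
    Contextual n (↑S : Set (Mat n)) ↔
      ∃ A ∈ T, ∃ B ∈ T, ∃ C ∈ T,
        Commute A B ∧ Commute A C ∧ PAntiCommute B C := by
  have hS' : ∀ M ∈ (↑S : Set (Mat n)), IsPauli n M := fun M hM => hS M (by simpa using hM)
  have hTS : T ⊆ (↑S : Set (Mat n)) := by
    rw [hT]
    exact fun P hP => hP.1
  have hTnc : ∀ P ∈ T, ∃ Q ∈ (↑S : Set (Mat n)), ¬ Commute P Q := by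
    intro P hP
    rw [hT] at hP
    obtain ⟨-, Q, hQ, -, h⟩ := hP
    exact ⟨Q, hQ, h⟩
  constructor
  · intro hctx
    by_contra hno
    refine not_contextual hS' hTS ?_ hTnc ?_ hctx
    · intro P hP hPT Q hQ
      by_contra h
      refine hPT ?_
      rw [hT]
      exact ⟨hP, Q, hQ, fun e => h (e ▸ Commute.refl _), h⟩
    · intro A hA B hB C hC hAB hAC
      rcases commute_or_anti (hS' B (hTS hB)) (hS' C (hTS hC)) with h | h
      · exact h
      · exact absurd ⟨A, hA, B, hB, C, hC, hAB, hAC, h⟩ hno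
  · rintro ⟨A, hA, B, hB, C, hC, hAB, hAC, hBC⟩
    obtain ⟨D, hD, hAD⟩ := hTnc A hA
    exact contextual_of_triple hS' (hTS hA) (hTS hB) (hTS hC) hD hAB hAC hBC
      ((commute_or_anti (hS' A (hTS hA)) (hS' D hD)).resolve_left hAD)
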